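/- For all even natural numbers m,n with m,n ≥ 4, the integral ∫_ℝ μ_m(x)·μ_n(x)·e^{−x²}/(1+2x²)² dx equals √π·n·(n−1)(n−2)·(∏_{j=1}^{(n−4)/2}(n − 2(1+j)))² / (n−1)! if m = n, and equals 0 if m ≠ n; moreover ∫_ℝ (μ_0(x))²·e^{−x²}/(1+2x²)² dx = √π/2. -/

import Mathlib

/-- Even coefficients c_{2k}(n) of the generalized power series. -/
noncomputable def ceven (n k : ℕ) : ℂ :=
  if k = 0 then 1
  else if k = 1 then -(n : ℂ)
  else (-1) ^ k * 2 ^ k * (n : ℂ) * ((n : ℂ) - ((2 * (k : ℂ) - 1) ^ 2 + 1)) *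
    (∏ j ∈ Finset.Icc 1 (k - 2), ((n : ℂ) - 2 * (1 + (j : ℂ)))) /
      (Nat.factorial (2 * k) : ℂ)

/-- Odd coefficients: `codd n k` is c_{2k-1}(n), for k ≥ 1. -/
noncomputable def codd (n k : ℕ) : ℂ :=
  if k ≤ 1 then 1
  else (-1) ^ (k + 1) * 2 ^ (k - 1) * ((n : ℂ) - ((2 * ((k : ℂ) - 1)) ^ 2 + 1)) *
    (∏ j ∈ Finset.Icc 1 (k - 2), ((n : ℂ) - (2 * (1 + (j : ℂ)) - 1))) /
      (Nat.factorial (2 * k - 1) : ℂ)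

/-- μₙ(z) = Σ_{k≥0} c_{2k}(n)·z^{2k}. -/
noncomputable def muF (n : ℕ) (z : ℂ) : ℂ := ∑' k : ℕ, ceven n k * z ^ (2 * k)

/-- νₙ(z) = Σ_{k≥1} c_{2k-1}(n)·z^{2k-1}. -/
noncomputable def nuF (n : ℕ) (z : ℂ) : ℂ := ∑' k : ℕ, codd n (k + 1) * z ^ (2 * k + 1)

/-- βₙ = μₙ + νₙ. -/
noncomputable def betaF (n : ℕ) (z : ℂ) : ℂ := muF n z + nuF n z

/-!
Substituting `t = √2 x` turns the weight into `exp (-t²/2) / (1 + t²)²`. Put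
`D h = (1 + X²) h' - (X³ + 3X) h`. Up to a sign `D` is the adjoint of `d/dt`, because
`D h · exp (-t²/2) / (1 + t²)²` is the derivative of `h · exp (-t²/2) / (1 + t²)`. If `h` is the
Hermite polynomial `Heₙ`, then Hermite's equation gives `(D h)' = -(n + 3) (1 + X²) h`, so the
orthogonality of the polynomials `D Heₙ` reduces to that of the `Heₙ`. Comparing coefficients
shows that `μ_{n+3}(x)` is `(D Heₙ)(√2 x)`, normalised to have constant term `1`, for odd `n`.
For `μ₀ = 1` one uses `D X = 2 - (1 + X²)²`, which integrates to `0`.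
-/

section

open Polynomial MeasureTheory Real
open scoped Nat

theorem derivative_hermite_succ (n : ℕ) :
    derivative (hermite (n + 1)) = (n + 1 : ℤ[X]) * hermite n := by
  induction n with
  | zero => simp
  | succ n ih =>
    rw [hermite_succ (n + 1), derivative_sub, derivative_mul, derivative_X, ih, hermite_succ n]
    simp only [derivative_mul, derivative_add, derivative_natCast, derivative_one]
    push_cast
    ring

theorem derivative_derivative_hermite (n : ℕ) :
    derivative (derivative (hermite n)) =
      X * derivative (hermite n) - (n : ℤ[X]) * hermite n := by
  cases n with
  | zero => simp
  | succ n =>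
    rw [derivative_hermite_succ, hermite_succ]
    simp only [derivative_mul, derivative_add, derivative_natCast, derivative_one]
    push_cast
    ring

theorem coeff_hermite_add_two (n k : ℕ) :
    ((k : ℤ) + 2) * (k + 1) * (hermite n).coeff (k + 2) = (k - n) * (hermite n).coeff k := by
  have h := congrArg (coeff · k) (derivative_derivative_hermite n)
  cases k with
  | zero =>
    simp only [coeff_sub, coeff_X_mul_zero, coeff_derivative, coeff_natCast_mul] at h
    push_cast at h ⊢
    linear_combination h
  | succ k =>
    simp only [coeff_sub, coeff_X_mul, coeff_derivative, coeff_natCast_mul] at h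
    push_cast at h ⊢
    linear_combination h

theorem factorial_mul_coeff_hermite (n k : ℕ) :
    ((2 * k + 1)! : ℤ) * (hermite n).coeff (2 * k + 1) =
      (hermite n).coeff 1 * ∏ j ∈ Finset.Icc 1 k, (2 * j - 1 - n : ℤ) := by
  induction k with
  | zero => simp
  | succ k ih =>
    have h := coeff_hermite_add_two n (2 * k + 1)
    rw [Finset.prod_Icc_succ_top (by lia), ← mul_assoc, ← ih,
      show 2 * (k + 1) + 1 = 2 * k + 1 + 2 by ring, Nat.factorial_succ, Nat.factorial_succ]
    push_cast at h ⊢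
    linear_combination ((2 * k + 1)! : ℤ) * h

theorem coeff_one_hermite_two_mul_add_one (r : ℕ) :
    (hermite (2 * r + 1)).coeff 1 = (-1) ^ r * ((2 * r + 1)‼ : ℤ) := by
  rw [coeff_hermite_explicit, Nat.doubleFactorial_add_one, Nat.choose_one_right]
  push_cast
  ring

section Darboux

variable {R : Type*} [CommRing R]

/-- The first-order operator `h ↦ q h' - (q' + X q) h` with `q = 1 + X²`, a Darboux transformation
of the Hermite operator, which takes Hermite polynomials to exceptional ones. -/
noncomputable def darboux (h : R[X]) : R[X] :=
  (1 + X ^ 2) * derivative h - (X ^ 3 + 3 * X) * h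

theorem derivative_darboux (h : R[X]) :
    derivative (darboux h) =
      (1 + X ^ 2) * (derivative (derivative h) - X * derivative h - 3 * h) := by
  simp only [darboux, derivative_sub, derivative_mul, derivative_add, derivative_X_pow,
    derivative_X, derivative_one, derivative_ofNat, map_natCast]
  push_cast
  ring

end Darboux

/-- The exceptional Hermite polynomial of degree `n + 3` (not normalised), indexed by the Hermite
polynomial it comes from. -/
noncomputable def exceptionalHermite (n : ℕ) : ℤ[X] :=
  darboux (hermite n)

theorem derivative_exceptionalHermite (n : ℕ) :
    derivative (exceptionalHermite n) = -((n + 3 : ℤ[X]) * ((1 + X ^ 2) * hermite n)) := by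
  rw [exceptionalHermite, derivative_darboux, derivative_derivative_hermite]
  ring

theorem coeff_zero_exceptionalHermite (n : ℕ) :
    (exceptionalHermite n).coeff 0 = (hermite n).coeff 1 := by
  simp [exceptionalHermite, darboux, mul_coeff_zero, coeff_derivative]

theorem coeff_exceptionalHermite_add_one (n k : ℕ) :
    (exceptionalHermite n).coeff (k + 1) * (k + 1) =
      -((n + 3) * ((hermite n).coeff k + (X ^ 2 * hermite n).coeff k)) := by
  have h := congrArg (coeff · k) (derivative_exceptionalHermite n)
  rw [show (n + 3 : ℤ[X]) = C (n + 3 : ℤ) by simp, add_mul, one_mul] at h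
  simpa only [coeff_derivative, coeff_neg, coeff_C_mul, coeff_add] using h

theorem two_mul_coeff_two_exceptionalHermite (n : ℕ) :
    2 * (exceptionalHermite n).coeff 2 = -((n + 3) * (hermite n).coeff 1) := by
  have h := coeff_exceptionalHermite_add_one n 1
  rw [coeff_X_pow_mul', if_neg (by lia), add_zero] at h
  push_cast at h
  linear_combination h

theorem factorial_mul_coeff_exceptionalHermite (n k : ℕ) :
    ((2 * k + 4)! : ℤ) * (exceptionalHermite n).coeff (2 * k + 4) =
      (hermite n).coeff 1 * (n + 3) * (n + 3 - ((2 * k + 3) ^ 2 + 1)) *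
        ∏ j ∈ Finset.Icc 1 k, (2 * j - 1 - n : ℤ) := by
  have h := coeff_exceptionalHermite_add_one n (2 * k + 1 + 2)
  rw [coeff_X_pow_mul] at h
  have hlow := factorial_mul_coeff_hermite n k
  have hrec := coeff_hermite_add_two n (2 * k + 1)
  rw [Nat.factorial_succ, Nat.factorial_succ, Nat.factorial_succ]
  push_cast at h hrec ⊢
  linear_combination ((2 * k + 1)! : ℤ) * (2 * k + 3) * (2 * k + 2) * h -
    (n + 3) * ((2 * k + 1)! : ℤ) * hrec + (n + 3) * (n + 3 - ((2 * k + 3) ^ 2 + 1)) * hlow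

theorem coeff_exceptionalHermite_of_odd {n k : ℕ} (hn : Odd n) (hk : Odd k) :
    (exceptionalHermite n).coeff k = 0 := by
  obtain ⟨k, rfl⟩ := hk
  have h := coeff_exceptionalHermite_add_one n (2 * k)
  have hX : (X ^ 2 * hermite n).coeff (2 * k) = 0 := by
    rw [coeff_X_pow_mul']
    split_ifs
    · exact coeff_hermite_of_odd_add (by grind)
    · rfl
  rw [hX, coeff_hermite_of_odd_add (hn.add_even (even_two_mul k)), add_zero, mul_zero,
    neg_zero] at h
  exact (mul_eq_zero.1 h).resolve_right (by positivity)

theorem ceven_add_three_mul (n k : ℕ) :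
    ceven (n + 3) k * (hermite n).coeff 1 = 2 ^ k * ((exceptionalHermite n).coeff (2 * k) : ℂ) := by
  match k with
  | 0 => simp [ceven, coeff_zero_exceptionalHermite]
  | 1 =>
    have h := congrArg (Int.cast : ℤ → ℂ) (two_mul_coeff_two_exceptionalHermite n)
    push_cast at h
    simp only [ceven, one_ne_zero, if_false, if_true, pow_one, mul_one]
    push_cast
    linear_combination -h
  | k + 2 =>
    have h := congrArg (Int.cast : ℤ → ℂ) (factorial_mul_coeff_exceptionalHermite n k)
    have hprod : ∏ j ∈ Finset.Icc 1 k, (2 * j - 1 - n : ℂ) =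
        (-1) ^ k * ∏ j ∈ Finset.Icc 1 k, ((n + 3 : ℂ) - 2 * (1 + j)) := by
      have hneg (j : ℕ) : (2 * j - 1 - n : ℂ) = -1 * ((n + 3 : ℂ) - 2 * (1 + j)) := by ring
      simp_rw [hneg, Finset.prod_mul_distrib, Finset.prod_const, Nat.card_Icc,
        Nat.add_sub_cancel]
    have hfact : ((2 * k + 4)! : ℂ) ≠ 0 := by exact_mod_cast Nat.factorial_ne_zero _
    simp only [ceven, Nat.add_eq_zero_iff, OfNat.ofNat_ne_zero, and_false, if_false,
      Nat.add_sub_cancel, show k + 2 ≠ 1 by lia, show 2 * (k + 2) = 2 * k + 4 by ring]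
    push_cast at h ⊢
    rw [hprod] at h
    rw [div_mul_eq_mul_div, div_eq_iff hfact]
    linear_combination -2 ^ (k + 2) * h

theorem hasSum_coeff_two_mul_mul_pow {R A : Type*} [CommSemiring R] [CommSemiring A]
    [Algebra R A] [TopologicalSpace A] {p : R[X]} (hp : ∀ k, Odd k → p.coeff k = 0) (a : A) :
    HasSum (fun k => algebraMap R A (p.coeff (2 * k)) * a ^ (2 * k)) (aeval a p) := by
  have hinj : Function.Injective (2 * · : ℕ → ℕ) := mul_right_injective₀ two_ne_zero
  refine (hinj.hasSum_iff (f := fun k => algebraMap R A (p.coeff k) * a ^ k) fun k hk => ?_).2 ?_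
  · have hodd : Odd k := Nat.not_even_iff_odd.1 fun h => hk ⟨k / 2, Nat.two_mul_div_two_of_even h⟩
    simp [hp k hodd]
  · simp only [aeval_eq_sum_range, Algebra.smul_def]
    refine hasSum_sum_of_ne_finset_zero fun k hk => ?_
    rw [coeff_eq_zero_of_natDegree_lt (by simpa [Nat.lt_succ_iff] using hk), map_zero, zero_mul]

theorem muF_add_three_mul {n : ℕ} (hn : Odd n) (x : ℝ) :
    muF (n + 3) x * (hermite n).coeff 1 = (aeval (√2 * x) (exceptionalHermite n) : ℝ) := by
  have h := hasSum_coeff_two_mul_mul_pow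
    (fun k hk => coeff_exceptionalHermite_of_odd hn (k := k) hk) ((√2 * x : ℝ) : ℂ)
  have hsq : ((√2 : ℝ) : ℂ) ^ 2 = 2 := by exact_mod_cast sq_sqrt zero_le_two
  have hterm (k : ℕ) : ceven (n + 3) k * (x : ℂ) ^ (2 * k) * (hermite n).coeff 1 =
      algebraMap ℤ ℂ ((exceptionalHermite n).coeff (2 * k)) * ((√2 * x : ℝ) : ℂ) ^ (2 * k) := by
    rw [mul_right_comm, ceven_add_three_mul, Complex.ofReal_mul, mul_pow, pow_mul (√2 : ℂ), hsq]
    simp only [algebraMap_int_eq, eq_intCast]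
    ring
  rw [muF, ← tsum_mul_right, tsum_congr hterm, h.tsum_eq]
  exact aeval_algebraMap_apply ℂ (√2 * x) (exceptionalHermite n)

theorem muF_zero (z : ℂ) : muF 0 z = 1 := by
  rw [muF, tsum_eq_single 0 fun k hk => by simp [ceven, hk]]
  simp [ceven]

theorem hasDerivAt_exp_neg_sq_div_two (x : ℝ) :
    HasDerivAt (fun y => exp (-(y ^ 2 / 2))) (-x * exp (-(x ^ 2 / 2))) x := by
  refine ((hasDerivAt_pow 2 x).div_const 2).neg.exp.congr_deriv ?_
  rw [Pi.neg_apply]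
  push_cast
  ring

section GaussianIntegral

variable {R : Type*}

theorem integrable_aeval_mul_exp_neg_sq_div_two [CommSemiring R] [Algebra R ℝ] (P : R[X]) :
    Integrable fun x : ℝ => aeval x P * exp (-(x ^ 2 / 2)) := by
  induction P using Polynomial.induction_on' with
  | add P Q hP hQ => simpa only [map_add, add_mul] using! hP.add hQ
  | monomial k a =>
    have h := integrable_rpow_mul_exp_neg_mul_sq (b := 1 / 2) (by norm_num) (s := k)
      (neg_one_lt_zero.trans_le k.cast_nonneg)
    refine (h.const_mul (algebraMap R ℝ a)).congr (.of_forall fun x => ?_)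
    simp only [aeval_monomial, rpow_natCast]
    ring_nf

theorem integrable_aeval_mul_exp_div_pow [CommSemiring R] [Algebra R ℝ] (P : R[X]) (k : ℕ) :
    Integrable fun x : ℝ => aeval x P * exp (-(x ^ 2 / 2)) / (1 + x ^ 2) ^ k := by
  refine (integrable_aeval_mul_exp_neg_sq_div_two P).mono
    (Continuous.aestronglyMeasurable ?_) (.of_forall fun x => ?_)
  · exact (P.continuous_aeval.mul (by fun_prop)).div (by fun_prop) fun x => by positivity
  · rw [norm_div, norm_of_nonneg (by positivity : 0 ≤ (1 + x ^ 2) ^ k)]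
    exact div_le_self (norm_nonneg _) (one_le_pow₀ (le_add_of_nonneg_right (sq_nonneg x)))

variable [CommRing R] [Algebra R ℝ]

theorem integral_aeval_mul_X_mul_sub_derivative (P Q : R[X]) :
    ∫ x : ℝ, aeval x P * aeval x (X * Q - derivative Q) * exp (-(x ^ 2 / 2)) =
      ∫ x : ℝ, aeval x (derivative P) * aeval x Q * exp (-(x ^ 2 / 2)) := by
  have hint (S T : R[X]) := integrable_aeval_mul_exp_neg_sq_div_two (S * T)
  simp only [map_mul, mul_assoc] at hint
  have hv (x : ℝ) : HasDerivAt (fun y => aeval y Q * exp (-(y ^ 2 / 2)))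
      (aeval x (derivative Q - X * Q) * exp (-(x ^ 2 / 2))) x := by
    refine ((Q.hasDerivAt_aeval x).mul (hasDerivAt_exp_neg_sq_div_two x)).congr_deriv ?_
    simp only [map_sub, map_mul, aeval_X]
    ring
  have key := integral_mul_deriv_eq_deriv_mul_of_integrable
    (fun x _ => P.hasDerivAt_aeval x) (fun x _ => hv x) (hint _ _) (hint _ _) (hint _ _)
  rw [← neg_sub (derivative Q)]
  simp only [map_neg, mul_neg, neg_mul, integral_neg, mul_assoc]
  rw [key, neg_neg]

theorem hasDerivAt_aeval_mul_exp_div (Q : R[X]) (x : ℝ) :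
    HasDerivAt (fun y : ℝ => aeval y Q * exp (-(y ^ 2 / 2)) / (1 + y ^ 2))
      (aeval x (darboux Q) * exp (-(x ^ 2 / 2)) / (1 + x ^ 2) ^ 2) x := by
  have hq : HasDerivAt (fun y : ℝ => 1 + y ^ 2) (2 * x) x := by
    simpa using (hasDerivAt_pow 2 x).const_add 1
  refine (((Q.hasDerivAt_aeval x).mul (hasDerivAt_exp_neg_sq_div_two x)).div hq
    (by positivity)).congr_deriv ?_
  simp only [darboux, map_sub, map_mul, map_add, map_pow, map_one, map_ofNat, aeval_X,
    Pi.mul_apply]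
  ring

theorem integral_aeval_mul_darboux (P Q : R[X]) :
    ∫ x : ℝ, aeval x P * aeval x (darboux Q) * exp (-(x ^ 2 / 2)) / (1 + x ^ 2) ^ 2 =
      -∫ x : ℝ, aeval x (derivative P) * aeval x Q * exp (-(x ^ 2 / 2)) / (1 + x ^ 2) := by
  have hint (S T : R[X]) := integrable_aeval_mul_exp_div_pow (S * T)
  simp only [map_mul, mul_assoc, mul_div_assoc] at hint ⊢
  have hint_one (S T : R[X]) := hint S T 1
  simp only [pow_one] at hint_one
  refine integral_mul_deriv_eq_deriv_mul_of_integrable (fun x _ => P.hasDerivAt_aeval x)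
    (fun x _ => ?_) (hint _ _ 2) (hint_one _ _) (hint_one _ _)
  simpa only [mul_div_assoc] using hasDerivAt_aeval_mul_exp_div Q x

end GaussianIntegral

theorem integral_exp_neg_sq_div_two : ∫ x : ℝ, exp (-(x ^ 2 / 2)) = √(2 * π) := by
  simpa [div_eq_inv_mul] using integral_gaussian (1 / 2)

theorem integral_hermite_mul_hermite (m n : ℕ) :
    ∫ x : ℝ, aeval x (hermite m) * aeval x (hermite n) * exp (-(x ^ 2 / 2)) =
      if m = n then n ! * √(2 * π) else 0 := by
  induction n generalizing m with
  | zero =>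
    cases m with
    | zero => simpa using integral_exp_neg_sq_div_two
    | succ m =>
      simp_rw [mul_comm (aeval _ (hermite (m + 1))), hermite_succ,
        integral_aeval_mul_X_mul_sub_derivative]
      simp
  | succ n ih =>
    rw [hermite_succ, integral_aeval_mul_X_mul_sub_derivative]
    cases m with
    | zero => simp
    | succ m =>
      simp_rw [derivative_hermite_succ, map_mul, map_add, map_natCast, map_one, mul_assoc,
        integral_const_mul, ← mul_assoc, ih, Nat.add_right_cancel_iff]
      split_ifs with h
      · rw [h, Nat.factorial_succ]
        push_cast
        ring
      · rw [mul_zero]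

theorem integral_exceptionalHermite_mul_exceptionalHermite (m n : ℕ) :
    ∫ x : ℝ, aeval x (exceptionalHermite m) * aeval x (exceptionalHermite n) *
        exp (-(x ^ 2 / 2)) / (1 + x ^ 2) ^ 2 =
      if m = n then (n + 3) * n ! * √(2 * π) else 0 := by
  have hcancel (x : ℝ) : aeval x (derivative (exceptionalHermite m)) * aeval x (hermite n) *
      exp (-(x ^ 2 / 2)) / (1 + x ^ 2) =
        -(m + 3) * (aeval x (hermite m) * aeval x (hermite n) * exp (-(x ^ 2 / 2))) := by
    have hq : 1 + x ^ 2 ≠ 0 := by positivity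
    simp only [derivative_exceptionalHermite, map_neg, map_mul, map_add, map_one, map_pow,
      map_natCast, map_ofNat, aeval_X]
    field_simp
  refine (integral_aeval_mul_darboux (exceptionalHermite m) (hermite n)).trans ?_
  simp_rw [hcancel, integral_const_mul, integral_hermite_mul_hermite]
  split_ifs with h
  · rw [h]; ring
  · simp

theorem integral_exp_neg_sq_div_two_div_sq :
    ∫ x : ℝ, exp (-(x ^ 2 / 2)) / (1 + x ^ 2) ^ 2 = √(2 * π) / 2 := by
  have hX := integral_aeval_mul_darboux (1 : ℤ[X]) X
  have hsplit (x : ℝ) : aeval x (1 : ℤ[X]) * aeval x (darboux (X : ℤ[X])) * exp (-(x ^ 2 / 2)) /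
      (1 + x ^ 2) ^ 2 = 2 * (exp (-(x ^ 2 / 2)) / (1 + x ^ 2) ^ 2) - exp (-(x ^ 2 / 2)) := by
    have hq : 1 + x ^ 2 ≠ 0 := by positivity
    simp only [darboux, derivative_X, map_sub, map_mul, map_add, map_one, map_pow, map_ofNat,
      aeval_X]
    field_simp
    ring
  have hint := integrable_aeval_mul_exp_neg_sq_div_two (1 : ℤ[X])
  have hint_div := integrable_aeval_mul_exp_div_pow (1 : ℤ[X]) 2
  simp only [map_one, one_mul] at hint hint_div
  simp_rw [hsplit, integral_sub (hint_div.const_mul 2) hint, integral_const_mul,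
    integral_exp_neg_sq_div_two, derivative_one, map_zero, zero_mul, zero_div, integral_zero] at hX
  linarith

theorem integral_comp_sqrt_two_mul (f : ℝ → ℝ) :
    ∫ x, f (√2 * x) * exp (-x ^ 2) / (1 + 2 * x ^ 2) ^ 2 =
      (√2)⁻¹ * ∫ x, f x * exp (-(x ^ 2 / 2)) / (1 + x ^ 2) ^ 2 := by
  have h := Measure.integral_comp_mul_left
    (fun x => f x * exp (-(x ^ 2 / 2)) / (1 + x ^ 2) ^ 2) √2
  rw [abs_of_pos (by positivity), smul_eq_mul] at h
  simpa only [mul_pow, sq_sqrt zero_le_two, mul_div_cancel_left₀ _ (two_ne_zero' ℝ)] using h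

theorem integral_muF_mul_muF {m n : ℕ} (hm : Odd m) (hn : Odd n) :
    (∫ x : ℝ, muF (m + 3) x * muF (n + 3) x *
        Complex.exp (-(x : ℂ) ^ 2) / (1 + 2 * (x : ℂ) ^ 2) ^ 2) *
        ((hermite m).coeff 1 * (hermite n).coeff 1) =
      ((if m = n then √π * (n + 3) * n ! else 0 : ℝ) : ℂ) := by
  have hreal (x : ℝ) : muF (m + 3) x * muF (n + 3) x *
      Complex.exp (-(x : ℂ) ^ 2) / (1 + 2 * (x : ℂ) ^ 2) ^ 2 *
        ((hermite m).coeff 1 * (hermite n).coeff 1) =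
      ((aeval (√2 * x) (exceptionalHermite m) * aeval (√2 * x) (exceptionalHermite n) *
        exp (-x ^ 2) / (1 + 2 * x ^ 2) ^ 2 : ℝ) : ℂ) := by
    push_cast
    rw [← muF_add_three_mul hm, ← muF_add_three_mul hn]
    ring
  rw [← integral_mul_const]
  simp_rw [hreal]
  rw [integral_complex_ofReal, integral_comp_sqrt_two_mul fun x =>
    aeval x (exceptionalHermite m) * aeval x (exceptionalHermite n),
    integral_exceptionalHermite_mul_exceptionalHermite, sqrt_mul zero_le_two]
  congr 1
  split_ifs
  · field_simp
  · simp

theorem integral_muF_zero_sq :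
    ∫ x : ℝ, muF 0 x ^ 2 * Complex.exp (-(x : ℂ) ^ 2) / (1 + 2 * (x : ℂ) ^ 2) ^ 2 =
      ((√π / 2 : ℝ) : ℂ) := by
  have h := integral_comp_sqrt_two_mul fun _ => 1
  simp only [one_mul, integral_exp_neg_sq_div_two_div_sq, sqrt_mul zero_le_two] at h
  have hval : (√2)⁻¹ * (√2 * √π / 2) = √π / 2 := by field_simp
  rw [← hval, ← h, ← integral_complex_ofReal]
  simp [muF_zero]

theorem prod_Icc_two_mul_add_four_sub (r : ℕ) :
    ∏ j ∈ Finset.Icc 1 r, ((2 * r + 4 : ℝ) - 2 * (1 + j)) = (2 * r)‼ := by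
  rw [Nat.doubleFactorial_eq_prod_even, Nat.cast_prod]
  refine Finset.prod_nbij' (r - ·) (r - ·) ?_ ?_ ?_ ?_ fun j hj => ?_
  any_goals simp only [Finset.mem_Icc, Finset.mem_range]; lia
  push_cast [Nat.cast_sub (Finset.mem_Icc.1 hj).2]
  ring

theorem integral_muF_two_mul_add_four (r s : ℕ) :
    ∫ x : ℝ, muF (2 * r + 4) x * muF (2 * s + 4) x *
        Complex.exp (-(x : ℂ) ^ 2) / (1 + 2 * (x : ℂ) ^ 2) ^ 2 =
      ((if r = s then √π * (2 * s + 4) * (2 * s)‼ ^ 2 / (2 * s + 1)! else 0 : ℝ) : ℂ) := by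
  have h := integral_muF_mul_muF (odd_two_mul_add_one r) (odd_two_mul_add_one s)
  have hcoeff (k : ℕ) : ((hermite (2 * k + 1)).coeff 1 : ℂ) ≠ 0 := by
    rw [coeff_one_hermite_two_mul_add_one]
    simp [(Nat.doubleFactorial_pos _).ne']
  refine mul_right_cancel₀ (mul_ne_zero (hcoeff r) (hcoeff s)) (h.trans ?_)
  rw [← Complex.ofReal_intCast, ← Complex.ofReal_intCast, ← Complex.ofReal_mul,
    ← Complex.ofReal_mul, Complex.ofReal_inj]
  simp only [Nat.add_right_cancel_iff, mul_right_inj' (two_ne_zero' ℕ)]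
  split_ifs with hrs
  · have hsign : ((-1 : ℝ) ^ s) ^ 2 = 1 := by rw [pow_right_comm, neg_one_sq, one_pow]
    have hodd : ((2 * s + 1)‼ : ℝ) ≠ 0 := by exact_mod_cast (Nat.doubleFactorial_pos _).ne'
    have heven : ((2 * s)‼ : ℝ) ≠ 0 := by exact_mod_cast (Nat.doubleFactorial_pos _).ne'
    rw [hrs, coeff_one_hermite_two_mul_add_one, Nat.factorial_eq_mul_doubleFactorial]
    push_cast
    field_simp
    rw [hsign]
    ring
  · rw [zero_mul]

end

theorem stmt17 :
    (∀ m n : ℕ, Even m → Even n → 4 ≤ m → 4 ≤ n →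
      ∫ x : ℝ, muF m (x : ℂ) * muF n (x : ℂ) *
          Complex.exp (-(x : ℂ) ^ 2) / (1 + 2 * (x : ℂ) ^ 2) ^ 2
        = if m = n then
            ((Real.sqrt Real.pi * (n : ℝ) * (((n : ℝ) - 1) * ((n : ℝ) - 2)) *
              (∏ j ∈ Finset.Icc 1 ((n - 4) / 2), ((n : ℝ) - 2 * (1 + (j : ℝ)))) ^ 2 /
                (Nat.factorial (n - 1) : ℝ) : ℝ) : ℂ)
          else 0) ∧
    (∫ x : ℝ, (muF 0 (x : ℂ)) ^ 2 * Complex.exp (-(x : ℂ) ^ 2) / (1 + 2 * (x : ℂ) ^ 2) ^ 2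
      = ((Real.sqrt Real.pi / 2 : ℝ) : ℂ)) := by
  refine ⟨fun m n hm hn h4m h4n => ?_, integral_muF_zero_sq⟩
  obtain ⟨r, rfl⟩ : ∃ r, m = 2 * r + 4 := ⟨m / 2 - 2, by grind⟩
  obtain ⟨s, rfl⟩ : ∃ s, n = 2 * s + 4 := ⟨n / 2 - 2, by grind⟩
  have hfact : (((2 * s + 3).factorial : ℕ) : ℝ) =
      (2 * s + 3) * (2 * s + 2) * (2 * s + 1).factorial := by
    rw [Nat.factorial_succ, Nat.factorial_succ]
    push_cast
    ring
  rw [integral_muF_two_mul_add_four, show (2 * s + 4 - 4) / 2 = s by lia,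
    show 2 * s + 4 - 1 = 2 * s + 3 by lia]
  simp only [Nat.add_right_cancel_iff, mul_right_inj' (two_ne_zero' ℕ)]
  split_ifs
  · rw [Complex.ofReal_inj]
    push_cast
    rw [prod_Icc_two_mul_add_four_sub, hfact]
    field_simp
    ring
  · rfl
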